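/- arXiv:1912.04350 — 3 statements merged into one kernel-verified Lean document; each statement's English description precedes it below -/
import Mathlib

section
/- Let {G_i}_{i ∈ I} be a family of poly-free groups each of poly-free length at most n. Then the free product ∗_{i ∈ I} G_i is a poly-free group of length at most n. -/
universe u v

/-- Poly-free with a subnormal chain of length `n` (length at most `n`,
since successive subgroups may coincide): there is a chain
`1 = G₀ ⊴ G₁ ⊴ ⋯ ⊴ Gₙ = G` with each quotient `Gᵢ₊₁/Gᵢ` a free group. -/
def IsPolyFreeOfLen : ℕ → (G : Type u) → [Group G] → Prop
  | 0, G, _ => Subsingleton G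
  | n + 1, G, _ => ∃ (N : Subgroup G) (_ : N.Normal),
      IsPolyFreeOfLen n N ∧ IsFreeGroup (G ⧸ N)

/-- A group is poly-free if it admits a subnormal chain with free quotients. -/
def IsPolyFree (G : Type u) [Group G] : Prop := ∃ n, IsPolyFreeOfLen n G

/-- Normally poly-free with a chain of length `n`: a chain
`1 = G₀ ≤ G₁ ≤ ⋯ ≤ Gₙ = G` with every `Gᵢ` normal in `G` and every quotient
`Gᵢ₊₁/Gᵢ` a free group (expressed via a surjection onto a free group whose
kernel is the previous term). -/
def IsNormallyPolyFreeOfLen (n : ℕ) (G : Type u) [Group G] : Prop :=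
  ∃ c : Fin (n + 1) → Subgroup G,
    c 0 = ⊥ ∧ c (Fin.last n) = ⊤ ∧ (∀ i : Fin n, c i.castSucc ≤ c i.succ) ∧
    (∀ i, (c i).Normal) ∧
    ∀ i : Fin n, ∃ (F : Type u) (_ : Group F) (f : ↥(c i.succ) →* F),
      IsFreeGroup F ∧ Function.Surjective f ∧
      f.ker = (c i.castSucc).subgroupOf (c i.succ)

/-- A group is normally poly-free if it admits such a chain of some length. -/
def IsNormallyPolyFree (G : Type u) [Group G] : Prop :=
  ∃ n, IsNormallyPolyFreeOfLen n G

/-!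
Let `Q i` be the free top quotient of `G i`. The free product of the `Q i` is free, and by
induction it suffices to show that the kernel of the map onto it is a free product of copies of the
kernels of `G i → Q i`. In terms of Bass-Serre theory, this kernel acts on the tree of the free
product of the `G i`, with trivial edge stabilizers, and the quotient is the tree of the free
product of the `Q i`; so it is the free product of vertex stabilizers, namely of conjugates of
the kernels of `G i → Q i`, one for each right coset of `Q i`.

To verify this algebraically, lift reduced words in the `Q i` letter by letter along set-theoretic
sections. Every `g` ought to factor uniquely as the lift of a reduced word `w` times an element `x`
of the abstract free product of kernels. The Schreier cocycle of the sections tells how left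
multiplication by an element of `G i` has to change `(x, w)`. These formulas do define an action of
the free product of the `G i` on the pairs, and existence and uniqueness of the factorization are
read off from the orbit of `(1, empty)`.
-/

open Monoid Monoid.CoprodI

namespace IsPolyFreeOfLen

theorem of_surjective_of_ker {n : ℕ} {G : Type u} {F : Type*} [Group G] [Group F] [IsFreeGroup F]
    (f : G →* F) (hf : Function.Surjective f) (hker : IsPolyFreeOfLen n f.ker) :
    IsPolyFreeOfLen (n + 1) G :=
  ⟨f.ker, inferInstance, hker,
    IsFreeGroup.ofMulEquiv (QuotientGroup.quotientKerEquivOfSurjective f hf).symm⟩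

theorem of_mulEquiv {n : ℕ} {G : Type u} {H : Type v} [Group G] [Group H] (e : G ≃* H)
    (hG : IsPolyFreeOfLen n G) : IsPolyFreeOfLen n H := by
  induction n generalizing G H with
  | zero =>
    have : Subsingleton G := hG
    exact e.symm.subsingleton
  | succ n ih =>
    obtain ⟨N, _, hN, _⟩ := hG
    let f : H →* G ⧸ N := (QuotientGroup.mk' N).comp e.symm
    have hker : f.ker = N.map e := by
      rw [MonoidHom.ker_comp_mulEquiv, QuotientGroup.ker_mk', MulEquiv.symm_symm]
    refine of_surjective_of_ker f ((QuotientGroup.mk'_surjective N).comp e.symm.surjective) ?_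
    rw [hker]
    exact ih (e.subgroupMap N) hN

end IsPolyFreeOfLen

section FreeProduct

variable {ι : Type*} {G Q : ι → Type*} [∀ i, Monoid (G i)] [∀ i, Monoid (Q i)]

/-- The homomorphism of free products induced by a family of homomorphisms. -/
def coprodIMap (p : ∀ i, G i →* Q i) : CoprodI G →* CoprodI Q :=
  CoprodI.lift fun i => of.comp (p i)

theorem coprodIMap_of (p : ∀ i, G i →* Q i) {i : ι} (g : G i) :
    coprodIMap p (of g) = of (p i g) :=
  CoprodI.lift_of _ g

theorem coprodIMap_surjective {p : ∀ i, G i →* Q i} (hp : ∀ i, Function.Surjective (p i)) :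
    Function.Surjective (coprodIMap p) := by
  intro x
  induction x using CoprodI.induction_on with
  | one => exact ⟨1, map_one _⟩
  | of i q =>
    obtain ⟨g, rfl⟩ := hp i q
    exact ⟨of g, coprodIMap_of p g⟩
  | mul x y hx hy =>
    obtain ⟨a, rfl⟩ := hx
    obtain ⟨b, rfl⟩ := hy
    exact ⟨a * b, map_mul _ a b⟩

theorem subsingleton_coprodI [∀ i, Subsingleton (G i)] : Subsingleton (CoprodI G) := by
  have eq_one (x : CoprodI G) : x = 1 := by
    induction x using CoprodI.induction_on with
    | one => rfl
    | of i g => rw [Subsingleton.elim g 1, map_one]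
    | mul x y hx hy => rw [hx, hy, mul_one]
  exact ⟨fun x y => (eq_one x).trans (eq_one y).symm⟩

/-- Reindexing of a free product along `ULift`, used to move its index type to a larger universe. -/
def coprodIULiftEquiv : CoprodI (fun i : ULift ι => G i.down) ≃* CoprodI G :=
  MonoidHom.toMulEquiv
    (CoprodI.lift fun i => of (i := i.down))
    (CoprodI.lift fun i => of (M := fun i : ULift ι => G i.down) (i := ⟨i⟩))
    (CoprodI.ext_hom _ _ fun i => by ext; simp)
    (CoprodI.ext_hom _ _ fun i => by ext; simp)

end FreeProduct

/-- A set-theoretic section of a group homomorphism that sends `1` to `1`. -/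
structure NormalizedSection {G Q : Type*} [Group G] [Group Q] (p : G →* Q) where
  /-- The underlying function, in general not a homomorphism. -/
  toFun : Q → G
  rightInverse : Function.RightInverse toFun p
  map_one : toFun 1 = 1

namespace NormalizedSection

variable {G Q : Type*} [Group G] [Group Q] {p : G →* Q}

instance : CoeFun (NormalizedSection p) fun _ => Q → G := ⟨toFun⟩

theorem nonempty_of_surjective (hp : Function.Surjective p) : Nonempty (NormalizedSection p) :=
  ⟨{  toFun := fun q => Function.surjInv hp q * (Function.surjInv hp 1)⁻¹
      rightInverse := fun q => by simp [Function.surjInv_eq]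
      map_one := mul_inv_cancel _ }⟩

variable (s : NormalizedSection p)

/-- The Schreier cocycle of a section: the factor `n` of `g * s q = s (p g * q) * n`. -/
def cocycle (g : G) (q : Q) : p.ker :=
  ⟨(s (p g * q))⁻¹ * g * s q, by simp [MonoidHom.mem_ker, s.rightInverse _]⟩

@[simp]
theorem coe_cocycle (g : G) (q : Q) : (s.cocycle g q : G) = (s (p g * q))⁻¹ * g * s q := rfl

theorem cocycle_one_left (q : Q) : s.cocycle 1 q = 1 := by
  ext
  simp

theorem cocycle_mul (g h : G) (q : Q) :
    s.cocycle (g * h) q = s.cocycle g (p h * q) * s.cocycle h q := by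
  ext
  simp [mul_assoc]

theorem cocycle_apply_one (q : Q) : s.cocycle (s q) 1 = 1 := by
  ext
  simp [s.map_one, s.rightInverse q]

theorem cocycle_coe_one (n : p.ker) : s.cocycle n 1 = n := by
  have hn : p n = 1 := n.property
  ext
  simp [s.map_one, hn]

end NormalizedSection

section Kernel

variable {ι : Type*} {G Q : ι → Type*} [∀ i, Group (G i)] [∀ i, Group (Q i)]

/-- Pairs of an index `i` and a right coset of `Q i` in the free product of the `Q i`, the coset
being encoded by its shortest representative: the reduced word that does not start in `Q i`. -/
abbrev CosetIndex (Q : ι → Type*) [∀ i, Group (Q i)] :=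
  Σ i, {w : Word Q // w.fstIdx ≠ some i}

/-- The abstract free product of one copy of `ker (p i)` for every `i` and every right coset of
`Q i` in the free product of the `Q i`. -/
abbrev KernelCoprod (p : ∀ i, G i →* Q i) :=
  CoprodI fun j : CosetIndex Q => (p j.1).ker

variable {p : ∀ i, G i →* Q i} (s : ∀ i, NormalizedSection (p i))

/-- The lift of a reduced word to the free product of the `G i`, letter by letter. -/
def wordLift (w : Word Q) : CoprodI G :=
  (w.toList.map fun l => of (s l.1 l.2)).prod

theorem wordLift_empty : wordLift s Word.empty = 1 := rfl

theorem wordLift_cons {i : ι} (q : Q i) (w : Word Q) (hw : w.fstIdx ≠ some i)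
    (hq : q ≠ 1) : wordLift s (Word.cons q w hw hq) = of (s i q) * wordLift s w :=
  List.prod_cons

theorem wordLift_rcons [∀ i, DecidableEq (Q i)] {i : ι} (a : Word.Pair Q i) :
    wordLift s (Word.rcons a) = of (s i a.head) * wordLift s a.tail := by
  by_cases h : a.head = 1
  · simp [Word.rcons, h, (s i).map_one]
  · simp [Word.rcons, h, wordLift_cons]

/-- The homomorphism that embeds the free factor `ker (p i)` belonging to the word `w` as the
conjugate of `ker (p i)` by the inverse of the lift of `w`. -/
def kernelHom : KernelCoprod p →* CoprodI G :=
  CoprodI.lift fun j =>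
    (MulAut.conj (wordLift s j.2.1)⁻¹).toMonoidHom.comp (of.comp (p j.1).ker.subtype)

theorem kernelHom_of (j : CosetIndex Q) (n : (p j.1).ker) :
    kernelHom s (of (M := fun j : CosetIndex Q => (p j.1).ker) n) =
      (wordLift s j.2.1)⁻¹ * of (n : G j.1) * wordLift s j.2.1 := by
  simp [kernelHom]

/-- The value of the Schreier cocycle of `Q i` at `g` and the head of `a`, placed in the free factor
of `KernelCoprod p` that belongs to the tail of `a`. -/
def pairCocycle {i : ι} (g : G i) (a : Word.Pair Q i) : KernelCoprod p :=
  of (M := fun j : CosetIndex Q => (p j.1).ker) (i := ⟨i, a.tail, a.fstIdx_ne⟩)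
    ((s i).cocycle g a.head)

theorem pairCocycle_one {i : ι} (a : Word.Pair Q i) : pairCocycle s (1 : G i) a = 1 := by
  rw [pairCocycle, NormalizedSection.cocycle_one_left, map_one]

theorem pairCocycle_mul {i : ι} (g h : G i) (a : Word.Pair Q i) :
    pairCocycle s (g * h) a =
      pairCocycle s g { a with head := p i h * a.head } * pairCocycle s h a := by
  simp only [pairCocycle, NormalizedSection.cocycle_mul, map_mul]

theorem wordLift_rcons_mul_kernelHom_pairCocycle [∀ i, DecidableEq (Q i)] {i : ι} (g : G i)
    (a : Word.Pair Q i) :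
    wordLift s (Word.rcons { a with head := p i g * a.head }) *
        kernelHom s (pairCocycle s g a) =
      of g * wordLift s (Word.rcons a) := by
  simp [wordLift_rcons, pairCocycle, kernelHom_of, mul_assoc]

section Action

variable [DecidableEq ι] [∀ i, DecidableEq (Q i)]

/-- The action of the free product of the `G i` on `KernelCoprod p × Word Q`, the candidate for its
regular action: `(x, w)` stands for the element `wordLift s w * kernelHom s x`. -/
def schreierAction : CoprodI G →* Function.End (KernelCoprod p × Word Q) :=
  CoprodI.lift fun i =>
    { toFun g z := (pairCocycle s g (Word.equivPair i z.2) * z.1, p i g • z.2)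
      map_one' := by
        funext z
        simp [pairCocycle_one, Function.End.one_def]
      map_mul' g h := by
        funext z
        refine Prod.ext ?_ ?_
        · change _ = pairCocycle s g (Word.equivPair i (of (p i h) • z.2)) * _
          rw [pairCocycle_mul, Word.equivPair_smul_same, mul_assoc]
        · change _ = p i g • p i h • z.2
          rw [map_mul, mul_smul] }

theorem schreierAction_of {i : ι} (g : G i) (z : KernelCoprod p × Word Q) :
    schreierAction s (of g) z =
      (pairCocycle s g (Word.equivPair i z.2) * z.1, p i g • z.2) := by
  rw [schreierAction, CoprodI.lift_of]
  rfl

theorem schreierAction_mul (g h : CoprodI G) (z : KernelCoprod p × Word Q) :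
    schreierAction s (g * h) z = schreierAction s g (schreierAction s h z) := by
  rw [map_mul]
  rfl

theorem schreierAction_snd (g : CoprodI G) (z : KernelCoprod p × Word Q) :
    (schreierAction s g z).2 = coprodIMap p g • z.2 := by
  induction g using CoprodI.induction_on generalizing z with
  | one => simp [Function.End.one_def]
  | of i g => rw [schreierAction_of, coprodIMap_of, Word.smul_eq_of_smul]
  | mul g h hg hh => rw [schreierAction_mul, hg, hh, map_mul, mul_smul]

theorem wordLift_mul_kernelHom_schreierAction (g : CoprodI G) (z : KernelCoprod p × Word Q) :
    wordLift s (schreierAction s g z).2 * kernelHom s (schreierAction s g z).1 =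
      g * (wordLift s z.2 * kernelHom s z.1) := by
  induction g using CoprodI.induction_on generalizing z with
  | one => simp [Function.End.one_def]
  | of i g =>
    rw [schreierAction_of, map_mul, ← mul_assoc, Word.smul_def,
      wordLift_rcons_mul_kernelHom_pairCocycle, ← Word.equivPair_symm,
      Equiv.symm_apply_apply, mul_assoc]
  | mul g h hg hh => rw [schreierAction_mul, hg, hh, mul_assoc]

theorem schreierAction_wordLift (x : KernelCoprod p) (w : Word Q) :
    schreierAction s (wordLift s w) (x, Word.empty) = (x, w) := by
  induction w using Word.consRecOn with
  | empty =>
    rw [wordLift_empty, map_one]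
    rfl
  | cons i q w hw hq ih =>
    rw [wordLift_cons, schreierAction_mul, ih, schreierAction_of, Word.equivPair_eq_of_fstIdx_ne hw,
      pairCocycle, NormalizedSection.cocycle_apply_one, map_one, one_mul, (s i).rightInverse,
      Word.smul_eq_of_smul, ← Word.cons_eq_smul]

theorem schreierAction_of_ker (j : CosetIndex Q) (n : (p j.1).ker) (x : KernelCoprod p) :
    schreierAction s (of (n : G j.1)) (x, j.2.1) = (of (i := j) n * x, j.2.1) := by
  rw [schreierAction_of, Word.equivPair_eq_of_fstIdx_ne j.2.2, pairCocycle,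
    NormalizedSection.cocycle_coe_one, n.property, one_smul]

theorem schreierAction_kernelHom (y x : KernelCoprod p) :
    schreierAction s (kernelHom s y) (x, Word.empty) = (y * x, Word.empty) := by
  induction y using CoprodI.induction_on generalizing x with
  | one => simp [Function.End.one_def]
  | of j n =>
    rw [kernelHom_of, mul_assoc, schreierAction_mul, schreierAction_mul, schreierAction_wordLift,
      schreierAction_of_ker, ← schreierAction_wordLift s _ j.2.1, ← schreierAction_mul,
      inv_mul_cancel, map_one]
    rfl
  | mul y z hy hz => rw [map_mul, schreierAction_mul, hz, hy, mul_assoc]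

end Action

theorem kernelHom_injective : Function.Injective (kernelHom s) := by
  classical
  intro x y hxy
  have h := schreierAction_kernelHom s x 1
  rw [hxy, schreierAction_kernelHom, mul_one, mul_one] at h
  exact congrArg Prod.fst h.symm

theorem range_kernelHom : (kernelHom s).range = (coprodIMap p).ker := by
  classical
  ext g
  rw [MonoidHom.mem_ker]
  constructor
  · rintro ⟨x, rfl⟩
    have h := schreierAction_snd s (kernelHom s x) (1, Word.empty)
    rw [schreierAction_kernelHom] at h
    simpa [Word.prod_smul] using congrArg Word.prod h.symm
  · intro hg
    have hw := schreierAction_snd s g (1, Word.empty)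
    rw [hg, one_smul] at hw
    have h := wordLift_mul_kernelHom_schreierAction s g (1, Word.empty)
    exact ⟨_, by simpa [hw, wordLift_empty] using h⟩

end Kernel

theorem nonempty_kernelCoprod_mulEquiv_ker {ι : Type*} {G Q : ι → Type*} [∀ i, Group (G i)]
    [∀ i, Group (Q i)] {p : ∀ i, G i →* Q i} (hp : ∀ i, Function.Surjective (p i)) :
    Nonempty (KernelCoprod p ≃* (coprodIMap p).ker) := by
  let s (i : ι) : NormalizedSection (p i) :=
    (NormalizedSection.nonempty_of_surjective (hp i)).some
  exact ⟨(MonoidHom.ofInjective (kernelHom_injective s)).trans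
    (MulEquiv.subgroupCongr (range_kernelHom s))⟩

theorem IsPolyFreeOfLen.coprodI_of_max_universe {n : ℕ} {ι : Type (max u v)} (G : ι → Type u)
    [∀ i, Group (G i)] (hG : ∀ i, IsPolyFreeOfLen n (G i)) : IsPolyFreeOfLen n (CoprodI G) := by
  induction n generalizing ι G with
  | zero =>
    have (i : ι) : Subsingleton (G i) := hG i
    exact subsingleton_coprodI
  | succ n ih =>
    choose N _ hN _ using hG
    let p (i : ι) : G i →* G i ⧸ N i := QuotientGroup.mk' (N i)
    have hp (i : ι) : Function.Surjective (p i) := QuotientGroup.mk'_surjective (N i)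
    obtain ⟨e⟩ := nonempty_kernelCoprod_mulEquiv_ker hp
    refine .of_surjective_of_ker (coprodIMap p) (coprodIMap_surjective hp) (.of_mulEquiv e ?_)
    -- The new index type `CosetIndex` lies in `Type (max u v)`, whence the universe of `ι`.
    refine ih _ fun j => ?_
    rw [QuotientGroup.ker_mk']
    exact hN j.1

/-- A free product of poly-free groups, each of poly-free length at most `n`,
is poly-free of length at most `n`. -/
theorem isPolyFreeOfLen_coprodI {ι : Type v} (G : ι → Type u) [∀ i, Group (G i)]
    (n : ℕ) (h : ∀ i, IsPolyFreeOfLen n (G i)) :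
    IsPolyFreeOfLen n (Monoid.CoprodI G) :=
  .of_mulEquiv coprodIULiftEquiv
    (.coprodI_of_max_universe (fun i : ULift.{u} ι => G i.down) fun i => h i.down)
end

section
/- Let F : G₁ ∗ G₂ → G₁ × G₂ be the canonical homomorphism from the free product to the direct product of two groups. Then the kernel of F is a free group. -/
/-!
The kernel is free on the commutators `⁅a, b⁆` with `a ≠ 1` and `b ≠ 1`. A projection `π : G → Q`
with section `t` induces the Kaloujnine–Krasner embedding of `G` into `ker π ≀ Q`, sending `g` to
the function `x ↦ t(x)⁻¹ g t(π(g)⁻¹ x)` together with `π(g)`. For `G = G₁ ∗ G₂`, `Q = G₁ × G₂` and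
`t(a, b) = b a`, the functions attached to elements of `G₁` and `G₂` have values that are visibly
words in the commutators. Reading these words in the free group on the pairs `(a, b)` lifts the
embedding to a homomorphism from `G₁ ∗ G₂` to `FreeGroup _ ≀ (G₁ × G₂)`, and evaluating the function
part at `1` inverts the evaluation of words in the kernel.
-/

namespace CommutatorWord

open Monoid.Coprod
open scoped commutatorElement

/-- Restricted to a subgroup that maps into the base group `Q → D`, a homomorphism to a regular
wreath product can be evaluated at a point of `Q`. -/
def evalLeft {G D Q : Type*} [Group G] [Group D] [Group Q] (f : G →* D ≀ᵣ Q) (K : Subgroup G)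
    (hK : ∀ g ∈ K, (f g).right = 1) (x : Q) : K →* D where
  toFun g := (f g).left x
  map_one' := by simp
  map_mul' g h := by simp [hK g g.2]

variable {A B : Type*} [Group A] [Group B]

variable (A B) in
/-- The pairs of nontrivial elements, which index the free generators of the kernel. -/
abbrev NontrivialPair := {p : A × B // p.1 ≠ 1 ∧ p.2 ≠ 1}

open Classical in
/-- The word standing for `⁅inl a, inr b⁆`: a free generator, or the empty word when the commutator
is trivial. -/
noncomputable def commutatorWord (a : A) (b : B) : FreeGroup (NontrivialPair A B) :=
  if h : a ≠ 1 ∧ b ≠ 1 then FreeGroup.of ⟨(a, b), h⟩ else 1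

@[simp]
theorem commutatorWord_one_left (b : B) : commutatorWord (1 : A) b = 1 := by
  simp [commutatorWord]

@[simp]
theorem commutatorWord_one_right (a : A) : commutatorWord a (1 : B) = 1 := by
  simp [commutatorWord]

theorem commutatorWord_coe (p : NontrivialPair A B) :
    commutatorWord p.1.1 p.1.2 = FreeGroup.of p :=
  dif_pos p.2

/-- Evaluation of words in the commutators `⁅inl a, inr b⁆` in the free product. -/
def evalWord : FreeGroup (NontrivialPair A B) →* A ∗ B :=
  FreeGroup.lift fun p => ⁅(inl p.1.1 : A ∗ B), inr p.1.2⁆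

theorem evalWord_commutatorWord (a : A) (b : B) :
    evalWord (commutatorWord a b) = ⁅(inl a : A ∗ B), inr b⁆ := by
  by_cases h : a ≠ 1 ∧ b ≠ 1
  · simp [commutatorWord, h, evalWord]
  · obtain rfl | rfl : a = 1 ∨ b = 1 := by tauto
    all_goals simp

theorem evalWord_mem_ker_toProd (w : FreeGroup (NontrivialPair A B)) :
    evalWord w ∈ (toProd : A ∗ B →* A × B).ker := by
  have toProd_comp_evalWord : (toProd : A ∗ B →* A × B).comp evalWord = 1 :=
    FreeGroup.ext_hom _ _ fun p => by
      ext <;> simp [evalWord, commutatorElement_def]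
  exact DFunLike.congr_fun toProd_comp_evalWord w

/-- The section of `toProd` on which the Kaloujnine–Krasner embedding is based. -/
def toProdSection (p : A × B) : A ∗ B := inr p.2 * inl p.1

/-- The restriction to `A` of the Kaloujnine–Krasner embedding for `toProdSection`, with its values
lifted to words in the commutators:
`(b * a)⁻¹ * x * (b * (x⁻¹ * a)) = ⁅a⁻¹, b⁻¹⁆ * ⁅a⁻¹ * x, b⁻¹⁆⁻¹`. -/
noncomputable def wreathInl : A →* FreeGroup (NontrivialPair A B) ≀ᵣ (A × B) where
  toFun x :=
    { left := fun p => commutatorWord p.1⁻¹ p.2⁻¹ * (commutatorWord (p.1⁻¹ * x) p.2⁻¹)⁻¹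
      right := (x, 1) }
  map_one' := by ext <;> simp
  map_mul' x y := by ext <;> simp [mul_assoc]

/-- The lift of the Kaloujnine–Krasner embedding to words in the commutators; on `B` its function
part is trivial because `(b * a)⁻¹ * y * (y⁻¹ * b * a) = 1`. -/
noncomputable def wreathHom : A ∗ B →* FreeGroup (NontrivialPair A B) ≀ᵣ (A × B) :=
  lift wreathInl (RegularWreathProduct.inl.comp (MonoidHom.inr A B))

theorem wreathHom_right (g : A ∗ B) : (wreathHom g).right = toProd g := by
  have rightHom_comp_wreathHom :
      RegularWreathProduct.rightHom.comp wreathHom = (toProd : A ∗ B →* A × B) :=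
    hom_ext rfl rfl
  exact DFunLike.congr_fun rightHom_comp_wreathHom g

theorem evalWord_wreathHom_left (g : A ∗ B) (p : A × B) :
    evalWord ((wreathHom g).left p) =
      (toProdSection p)⁻¹ * g * toProdSection ((toProd g)⁻¹ * p) := by
  induction g using Monoid.Coprod.induction_on generalizing p with
  | inl x =>
    simp [wreathHom, wreathInl, evalWord_commutatorWord, commutatorElement_def, toProdSection,
      mul_assoc]
  | inr y => simp [wreathHom, toProdSection, mul_assoc]
  | mul g h hg hh =>
    simp only [map_mul, RegularWreathProduct.mul_left, Pi.mul_apply, wreathHom_right, hg, hh,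
      mul_inv_rev, mul_assoc, mul_inv_cancel_left]

theorem wreathHom_commutator_left_one (a : A) (b : B) :
    (wreathHom ⁅(inl a : A ∗ B), inr b⁆).left 1 = commutatorWord a b := by
  simp [wreathHom, wreathInl, commutatorElement_def]

/-- Reads off an element of the kernel the word in the commutators that represents it. -/
noncomputable def kerToWord :
    (toProd : A ∗ B →* A × B).ker →* FreeGroup (NontrivialPair A B) :=
  evalLeft wreathHom _ (fun g hg => (wreathHom_right g).trans hg) 1

theorem evalWord_kerToWord (g : (toProd : A ∗ B →* A × B).ker) :
    evalWord (kerToWord g) = g := by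
  have toProd_eq_one : toProd (g : A ∗ B) = 1 := g.2
  simpa [toProd_eq_one, kerToWord, evalLeft, toProdSection] using
    evalWord_wreathHom_left (g : A ∗ B) 1

theorem kerToWord_evalWord (w : FreeGroup (NontrivialPair A B)) :
    kerToWord ⟨evalWord w, evalWord_mem_ker_toProd w⟩ = w := by
  have kerToWord_comp_evalWord :
      kerToWord.comp (evalWord.codRestrict _ evalWord_mem_ker_toProd) =
        MonoidHom.id (FreeGroup (NontrivialPair A B)) :=
    FreeGroup.ext_hom _ _ fun p => by
      change (wreathHom (evalWord (FreeGroup.of p))).left 1 = FreeGroup.of p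
      rw [← commutatorWord_coe, evalWord_commutatorWord, wreathHom_commutator_left_one]
  exact DFunLike.congr_fun kerToWord_comp_evalWord w

/-- The basis of the kernel consisting of the commutators of nontrivial elements of `A` and `B`. -/
noncomputable def kerToProdBasis :
    FreeGroupBasis (NontrivialPair A B) (toProd : A ∗ B →* A × B).ker where
  repr :=
    { kerToWord with
      invFun := fun w => ⟨evalWord w, evalWord_mem_ker_toProd w⟩
      left_inv := fun g => Subtype.ext (evalWord_kerToWord g)
      right_inv := kerToWord_evalWord }

end CommutatorWord

/-- The kernel of the canonical homomorphism from the free product `G₁ ∗ G₂` to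
the direct product `G₁ × G₂` is a free group. -/
theorem ker_coprod_to_prod_isFreeGroup (G₁ G₂ : Type*) [Group G₁] [Group G₂] :
    IsFreeGroup (Monoid.Coprod.lift (MonoidHom.inl G₁ G₂) (MonoidHom.inr G₁ G₂)).ker := by
  exact CommutatorWord.kerToProdBasis.isFreeGroup
end

section
/- Let C ≤ A and C ≤ B and G = A ∗_C B, and let f : G → Q be a homomorphism that is injective on B and whose restriction to A has free kernel. If moreover f is injective on C, then ker(f) is free; consequently, if B maps onto a normally poly-free group with the remaining data as above, G admits a quotient map with free kernel onto that group. -/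
universe u v

/-- The two-element family of groups `A` (at `true`) and `B` (at `false`). -/
abbrev Fam (A B : Type u) : Bool → Type u := fun b => bif b then A else B

instance famGroup (A B : Type u) [Group A] [Group B] : ∀ b, Group (Fam A B b) :=
  fun b => match b with
  | true => inferInstanceAs (Group A)
  | false => inferInstanceAs (Group B)

/-- The family of inclusions of `C` into `A` and `B`; the amalgamated free product
`A ∗_C B` is then `Monoid.PushoutI (famHom ι₁ ι₂)`, with canonical injections
`Monoid.PushoutI.of true : A →* A ∗_C B` and `Monoid.PushoutI.of false : B →* A ∗_C B`
and common map `Monoid.PushoutI.base : C →* A ∗_C B`. -/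
def famHom {A B C : Type u} [Group A] [Group B] [Group C] (ι₁ : C →* A) (ι₂ : C →* B) :
    ∀ b, C →* Fam A B b := fun b => match b with
  | true => ι₁
  | false => ι₂

/-!
Free groups are the projective groups, and projectivity of `ker f` for `f : G →* Q` is, by a
Shapiro-type argument, a lifting property of `f` itself: homomorphisms `G →* Y ≀ᵣ Q` over `f` lift
along `X ≀ᵣ Q →* Y ≀ᵣ Q` for every surjection `X →* Y`. In an amalgam one lifts first over the
amalgamated subgroup and then over each factor. Since `f` is injective on the amalgamated subgroup,
any two lifts over it are conjugate by an element that dies in `Y ≀ᵣ Q`, so the lifts over the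
factors can be corrected to agree there, and they glue.
-/

open Function RegularWreathProduct

theorem subsingleton_ker_of_injective {G Q : Type*} [Group G] [Group Q] {f : G →* Q}
    (hf : Injective f) : Subsingleton f.ker :=
  f.ker_eq_bot_iff.2 hf ▸ inferInstance

section Wreath

variable {X Y L Q : Type*} [Group X] [Group Y] [Group L] [Group Q]

/-- The homomorphism `X ≀ᵣ Q →* Y ≀ᵣ Q` applying `p` to every coordinate of the base group. -/
def wreathMap (Q : Type*) [Group Q] (p : X →* Y) : X ≀ᵣ Q →* Y ≀ᵣ Q where
  toFun w := ⟨fun x => p (w.left x), w.right⟩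
  map_one' := by ext <;> simp
  map_mul' w w' := by ext <;> simp

/-- `IsTransporter f t` says that `t x` carries a chosen representative of the coset `f(L) x`,
namely `(f (t x))⁻¹ * x`, to `x`. Independence of that representative from the point of the coset
is encoded as equivariance of `f ∘ t`. -/
def IsTransporter (f : L →* Q) (t : Q → L) : Prop :=
  ∀ g x, f (t (f g * x)) = f g * f (t x)

theorem exists_isTransporter (f : L →* Q) : ∃ t, IsTransporter f t := by
  obtain ⟨T, hT, -⟩ := f.range.exists_isComplement_right 1
  choose t ht using fun x => (hT.equiv x).1.2
  refine ⟨t, fun g x => ?_⟩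
  rw [ht, ht, hT.equiv_mul_left_of_mem ⟨g, rfl⟩, Subgroup.coe_mul]

namespace IsTransporter

variable {f : L →* Q} {t : Q → L}

theorem apply_inv_mul (ht : IsTransporter f t) (g : L) (x : Q) :
    f (t ((f g)⁻¹ * x)) = (f g)⁻¹ * f (t x) := by
  simpa using ht g⁻¹ x

theorem mem_ker (ht : IsTransporter f t) (g : L) (x : Q) :
    (t x)⁻¹ * g * t ((f g)⁻¹ * x) ∈ f.ker := by
  simp [MonoidHom.mem_ker, ht.apply_inv_mul]

/-- The homomorphism to the wreath product coinduced from homomorphisms `φ y : f.ker →* X`, one for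
each coset representative `y`. If every `φ y` is the identity, it is the Kaloujnine–Krasner
homomorphism `L →* f.ker ≀ᵣ Q`. The family `φ` is indexed by all of `Q` to avoid a subtype, but
only its values at the representatives chosen by `t` enter. -/
def coind (ht : IsTransporter f t) (φ : Q → f.ker →* X) : L →* X ≀ᵣ Q :=
  MonoidHom.mk' (fun g => ⟨fun x => φ ((f (t x))⁻¹ * x) ⟨_, ht.mem_ker g x⟩, f g⟩) fun g g' => by
    ext x
    · have hrep : (f (t ((f g)⁻¹ * x)))⁻¹ * ((f g)⁻¹ * x) = (f (t x))⁻¹ * x := by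
        simp [ht.apply_inv_mul, mul_assoc]
      simp only [mul_left, Pi.mul_apply, hrep, ← map_mul]
      congr 1
      ext
      simp [mul_assoc]
    · simp

theorem coind_left (ht : IsTransporter f t) (φ : Q → f.ker →* X) (g : L) (x : Q) :
    (ht.coind φ g).left x = φ ((f (t x))⁻¹ * x) ⟨_, ht.mem_ker g x⟩ := rfl

theorem wreathMap_comp_coind (ht : IsTransporter f t) (p : X →* Y) (φ : Q → f.ker →* X) :
    (wreathMap Q p).comp (ht.coind φ) = ht.coind fun y => p.comp (φ y) := rfl

theorem rightHom_comp_coind (ht : IsTransporter f t) (φ : Q → f.ker →* X) :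
    rightHom.comp (ht.coind φ) = f := rfl

end IsTransporter

section OverHom

variable {f : L →* Q} {ψ : L →* X ≀ᵣ Q}

theorem right_apply_of_rightHom_comp_eq (hψ : rightHom.comp ψ = f) (g : L) :
    (ψ g).right = f g :=
  DFunLike.congr_fun hψ g

theorem left_mul_of_rightHom_comp_eq (hψ : rightHom.comp ψ = f) (g g' : L) (x : Q) :
    (ψ (g * g')).left x = (ψ g).left x * (ψ g').left ((f g)⁻¹ * x) := by
  simp [right_apply_of_rightHom_comp_eq hψ]

/-- The `y`-th coordinate of a homomorphism `ψ : L →* X ≀ᵣ Q` lying over `f`, which is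
multiplicative on the kernel of `f`. -/
def kerCoord (hψ : rightHom.comp ψ = f) (y : Q) : f.ker →* X :=
  MonoidHom.mk' (fun n => (ψ n).left y) fun n n' => by
    rw [Subgroup.coe_mul, left_mul_of_rightHom_comp_eq hψ, f.mem_ker.1 n.2, inv_one, one_mul]

theorem kerCoord_apply (hψ : rightHom.comp ψ = f) (y : Q) (n : f.ker) :
    kerCoord hψ y n = (ψ n).left y := rfl

theorem IsTransporter.kerCoord_coind {t : Q → L} (ht : IsTransporter f t) (φ : Q → f.ker →* X)
    (x : Q) :
    kerCoord (ht.rightHom_comp_coind φ) x =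
      (φ ((f (t x))⁻¹ * x)).comp (MulAut.conjNormal (t x)⁻¹).toMonoidHom := by
  ext n
  refine congrArg (φ _) (Subtype.ext ?_)
  simp [f.mem_ker.1 n.2]

/-- The element of the base group collecting the values of `ψ` along the transporters `t`. -/
def transportElt (ψ : L →* X ≀ᵣ Q) (t : Q → L) : X ≀ᵣ Q :=
  ⟨fun x => (ψ (t x)).left x, 1⟩

theorem wreathMap_transportElt (p : X →* Y) (ψ : L →* X ≀ᵣ Q) (t : Q → L) :
    wreathMap Q p (transportElt ψ t) = transportElt ((wreathMap Q p).comp ψ) t := rfl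

/- Expand `ψ` on both sides of `t x * ((t x)⁻¹ * g * t x') = g * t x'`, where
`x' = (f g)⁻¹ * x`. -/
theorem IsTransporter.semiconjBy_transportElt {t : Q → L} (ht : IsTransporter f t)
    (hψ : rightHom.comp ψ = f) (g : L) :
    SemiconjBy (transportElt ψ t) (ht.coind (kerCoord hψ) g) (ψ g) := by
  ext x
  · have hsplit := left_mul_of_rightHom_comp_eq hψ (t x) ((t x)⁻¹ * g * t ((f g)⁻¹ * x)) x
    rw [mul_assoc, mul_inv_cancel_left, left_mul_of_rightHom_comp_eq hψ g, ← mul_assoc] at hsplit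
    rw [mul_left, mul_left, Pi.mul_apply, Pi.mul_apply, right_apply_of_rightHom_comp_eq hψ]
    simpa only [transportElt, coind_left, kerCoord_apply, inv_one, one_mul] using hsplit.symm
  · simp [transportElt, right_apply_of_rightHom_comp_eq hψ, coind]

theorem IsTransporter.semiconjBy_transportElt_inl {t : Q → L} (ht : IsTransporter f t)
    (hf : Injective f) (hψ : rightHom.comp ψ = f) (g : L) :
    SemiconjBy (transportElt ψ t) (inl (f g)) (ψ g) := by
  have := subsingleton_ker_of_injective hf
  have hcoind : ht.coind (kerCoord hψ) g = inl (f g) := by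
    ext x
    · rw [coind_left, Subsingleton.elim (⟨_, ht.mem_ker g x⟩ : f.ker) 1, map_one]
      rfl
    · rfl
  exact hcoind ▸ ht.semiconjBy_transportElt hψ g

/- Both homomorphisms are conjugate to `inl.comp f`: the first cohomology of a subgroup of `Q`
with coefficients in functions on `Q` vanishes. -/
theorem exists_semiconjBy_of_wreathMap_comp_eq {p : X →* Y} {ψ₁ ψ₂ : L →* X ≀ᵣ Q}
    (hf : Injective f) (hψ₁ : rightHom.comp ψ₁ = f)
    (hp : (wreathMap Q p).comp ψ₁ = (wreathMap Q p).comp ψ₂) :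
    ∃ w : X ≀ᵣ Q, wreathMap Q p w = 1 ∧ ∀ g, SemiconjBy w (ψ₁ g) (ψ₂ g) := by
  have hψ₂ : rightHom.comp ψ₂ = f := (congrArg rightHom.comp hp).symm.trans hψ₁
  obtain ⟨t, ht⟩ := exists_isTransporter f
  refine ⟨transportElt ψ₂ t * (transportElt ψ₁ t)⁻¹, ?_, fun g => ?_⟩
  · rw [map_mul, map_inv, wreathMap_transportElt, wreathMap_transportElt, hp, mul_inv_cancel]
  · exact (ht.semiconjBy_transportElt_inl hf hψ₂ g).mul_left
      (ht.semiconjBy_transportElt_inl hf hψ₁ g).inv_symm_left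

end OverHom

end Wreath

theorem exists_comp_eq_of_isFreeGroup {F X Y : Type*} [Group F] [IsFreeGroup F] [Group X] [Group Y]
    {p : X →* Y} (hp : Surjective p) (η : F →* Y) : ∃ φ : F →* X, p.comp φ = η := by
  refine ⟨IsFreeGroup.lift fun a => surjInv hp (η (IsFreeGroup.of a)), ?_⟩
  apply IsFreeGroup.ext_hom
  simp [surjInv_eq]

theorem isFreeGroup_of_subsingleton (G : Type u) [Group G] [Subsingleton G] : IsFreeGroup G :=
  have : Unique G := uniqueOfSubsingleton 1
  IsFreeGroup.ofMulEquiv (MulEquiv.ofUnique : FreeGroup PEmpty.{u + 1} ≃* G)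

theorem isFreeGroup_ker_of_injective {G Q : Type*} [Group G] [Group Q] {f : G →* Q}
    (hf : Injective f) : IsFreeGroup f.ker :=
  have := subsingleton_ker_of_injective hf
  isFreeGroup_of_subsingleton _

theorem isFreeGroup_of_injective {F G : Type u} [Group F] [IsFreeGroup F] [Group G] {s : G →* F}
    (hs : Injective s) : IsFreeGroup G :=
  IsFreeGroup.ofMulEquiv (MonoidHom.ofInjective hs).symm

universe w u₁ u₂

/-- The wreath lifting property of `f : L →* Q`: every homomorphism `L →* Y ≀ᵣ Q` over `f` lifts
along the map of wreath products induced by any surjection `X →* Y`. It characterizes the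
homomorphisms with projective, that is free, kernel. -/
def HasWreathLifting {L : Type u₁} {Q : Type u₂} [Group L] [Group Q] (f : L →* Q) : Prop :=
  ∀ ⦃X Y : Type w⦄ [Group X] [Group Y] (p : X →* Y), Surjective p →
    ∀ ψ : L →* Y ≀ᵣ Q, rightHom.comp ψ = f → ∃ Ψ : L →* X ≀ᵣ Q, (wreathMap Q p).comp Ψ = ψ

namespace HasWreathLifting

variable {L M Q : Type*} [Group L] [Group M] [Group Q] {f : L →* Q}

theorem of_isFreeGroup_ker (hf : IsFreeGroup f.ker) : HasWreathLifting.{w} f := by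
  intro X Y _ _ p hp ψ hψ
  obtain ⟨t, ht⟩ := exists_isTransporter f
  choose φ hφ using fun y => exists_comp_eq_of_isFreeGroup hp (kerCoord hψ y)
  choose u hu using fun x => hp ((transportElt ψ t).left x)
  have hmap : wreathMap Q p ⟨u, 1⟩ = transportElt ψ t := by
    ext x
    · exact hu x
    · rfl
  have hcoind : (wreathMap Q p).comp (ht.coind φ) = ht.coind (kerCoord hψ) := by
    rw [ht.wreathMap_comp_coind, funext hφ]
  refine ⟨(MulAut.conj ⟨u, 1⟩).toMonoidHom.comp (ht.coind φ), MonoidHom.ext fun g => ?_⟩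
  calc wreathMap Q p (⟨u, 1⟩ * ht.coind φ g * ⟨u, 1⟩⁻¹)
      = transportElt ψ t * ht.coind (kerCoord hψ) g * (transportElt ψ t)⁻¹ := by
        rw [map_mul, map_mul, map_inv, hmap, ← hcoind, MonoidHom.comp_apply]
    _ = ψ g := mul_inv_eq_of_eq_mul (ht.semiconjBy_transportElt hψ g).eq

theorem exists_lift_extending (h : HasWreathLifting.{w} f) {j : M →* L}
    (hj : Injective (f.comp j)) {X Y : Type w} [Group X] [Group Y] {p : X →* Y}
    (hp : Surjective p) {ψ : L →* Y ≀ᵣ Q} (hψ : rightHom.comp ψ = f) {χ : M →* X ≀ᵣ Q}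
    (hχ : (wreathMap Q p).comp χ = ψ.comp j) :
    ∃ Ψ : L →* X ≀ᵣ Q, (wreathMap Q p).comp Ψ = ψ ∧ Ψ.comp j = χ := by
  obtain ⟨Ψ, rfl⟩ := h p hp ψ hψ
  obtain ⟨w, hw, hconj⟩ := exists_semiconjBy_of_wreathMap_comp_eq (ψ₁ := Ψ.comp j) hj
    (congrArg (fun r => r.comp j) hψ) hχ.symm
  refine ⟨(MulAut.conj w).toMonoidHom.comp Ψ, ?_, MonoidHom.ext fun m => ?_⟩
  · ext1 g
    simp [hw]
  · exact mul_inv_eq_of_eq_mul (hconj m).eq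

/- Lift the Kaloujnine–Krasner homomorphism to a wreath product of a free group: the coordinate
at `1` then splits the free group over `f.ker`, up to conjugation by `t 1`. -/
theorem isFreeGroup_ker {L : Type u₁} [Group L] {f : L →* Q} (h : HasWreathLifting.{u₁} f) :
    IsFreeGroup f.ker := by
  obtain ⟨t, ht⟩ := exists_isTransporter f
  obtain ⟨Ψ, hΨ⟩ := h (FreeGroup.prod : FreeGroup f.ker →* f.ker)
    (fun n => ⟨FreeGroup.of n, FreeGroup.prod.of⟩) (ht.coind fun _ => MonoidHom.id _)
    (ht.rightHom_comp_coind _)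
  have hright : rightHom.comp Ψ = f := congrArg rightHom.comp hΨ
  let s : f.ker →* FreeGroup f.ker :=
    (kerCoord hright 1).comp (MulAut.conjNormal (t 1)).toMonoidHom
  suffices hs : LeftInverse FreeGroup.prod s from isFreeGroup_of_injective hs.injective
  intro n
  let m : f.ker := MulAut.conjNormal (t 1) n
  calc FreeGroup.prod (s n)
      = kerCoord (ht.rightHom_comp_coind fun _ => MonoidHom.id _) 1 m :=
        congrFun (congrArg left (DFunLike.congr_fun hΨ (m : L))) 1
    _ = MulAut.conjNormal (t 1)⁻¹ m := by rw [ht.kerCoord_coind]; rfl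
    _ = n := by simp [m]

theorem pushoutI {ι H : Type*} {G : ι → Type*} [Group H] [∀ i, Group (G i)]
    {φ : ∀ i, H →* G i} {f : Monoid.PushoutI φ →* Q}
    (hbase : Injective (f.comp (Monoid.PushoutI.base φ)))
    (hof : ∀ i, HasWreathLifting.{w} (f.comp (Monoid.PushoutI.of i))) :
    HasWreathLifting.{w} f := by
  rintro X Y _ _ p hp ψ rfl
  obtain ⟨χ, hχ⟩ := of_isFreeGroup_ker (isFreeGroup_ker_of_injective hbase) p hp
    (ψ.comp (Monoid.PushoutI.base φ)) rfl
  choose Ψ hΨ hΨχ using fun i => (hof i).exists_lift_extending (j := φ i) (χ := χ)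
    (by rwa [MonoidHom.comp_assoc, Monoid.PushoutI.of_comp_eq_base]) hp
    (ψ := ψ.comp (Monoid.PushoutI.of i)) rfl
    (by rwa [MonoidHom.comp_assoc, Monoid.PushoutI.of_comp_eq_base])
  refine ⟨Monoid.PushoutI.lift Ψ χ hΨχ, Monoid.PushoutI.hom_ext (fun i => ?_) ?_⟩
  · rw [← hΨ i]
    ext1 g
    simp
  · rw [← hχ]
    ext1 g
    simp

end HasWreathLifting

theorem ker_isFreeGroup_of_amalgamated_injective_on_B_general {ι H Q : Type*} {G : ι → Type*}
    [Group H] [∀ i, Group (G i)] [Group Q] {φ : ∀ i, H →* G i} (f : Monoid.PushoutI φ →* Q)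
    (hbase : Injective (f.comp (Monoid.PushoutI.base φ)))
    (hof : ∀ i, IsFreeGroup (f.comp (Monoid.PushoutI.of (φ := φ) i)).ker) :
    IsFreeGroup f.ker :=
  (HasWreathLifting.pushoutI hbase fun i =>
    HasWreathLifting.of_isFreeGroup_ker (hof i)).isFreeGroup_ker

/-- Let `C ≤ A`, `C ≤ B` (via injections `ι₁`, `ι₂`), `G = A ∗_C B`, and let
`f : G → Q` be a homomorphism that is injective on `B`, injective on `C`, and
whose restriction to `A` has free kernel. Then `ker f` is free; consequently, if
`f` maps `G` onto a normally poly-free group `Q`, then `G` admits a quotient map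
with free kernel onto that group. -/
theorem ker_isFreeGroup_of_amalgamated_injective_on_B (A B C Q : Type u)
    [Group A] [Group B] [Group C] [Group Q]
    (ι₁ : C →* A) (ι₂ : C →* B)
    (h₁ : Function.Injective ι₁) (h₂ : Function.Injective ι₂)
    (f : Monoid.PushoutI (famHom ι₁ ι₂) →* Q)
    (hC : Function.Injective (f.comp (Monoid.PushoutI.base (famHom ι₁ ι₂))))
    (hB : Function.Injective (f.comp (Monoid.PushoutI.of (φ := famHom ι₁ ι₂) false)))
    (hA : IsFreeGroup (f.comp (Monoid.PushoutI.of (φ := famHom ι₁ ι₂) true)).ker) :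
    IsFreeGroup f.ker ∧
      (Function.Surjective f → IsNormallyPolyFree Q →
        ∃ g : Monoid.PushoutI (famHom ι₁ ι₂) →* Q,
          Function.Surjective g ∧ IsFreeGroup g.ker) := by
  have hker : IsFreeGroup f.ker := ker_isFreeGroup_of_amalgamated_injective_on_B_general f hC
    (Bool.forall_bool.2 ⟨isFreeGroup_ker_of_injective hB, hA⟩)
  exact ⟨hker, fun hf _ => ⟨f, hf, hker⟩⟩
end
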